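/- With the notation of the previous statement, $\lim_{\beta \downarrow 0} \tfrac{1}{\beta}\big(C^\beta(x,\eta) - \tfrac12|\bar\eta - x|^2\big) = \tfrac12\mathcal{W}_2^2(\gamma_{\bar\eta}, \eta)$ for every $x \in \mathbb{R}^d$ and $\eta \in \mathcal{P}_2(\mathbb{R}^d)$. In particular, $\lim_{\beta\downarrow 0}\tfrac1\beta C^\beta(x,\eta) = \tfrac12\mathcal{W}_2^2(\gamma_x,\eta)$ if $\bar\eta = x$, and $= +\infty$ otherwise. -/

import Mathlib

open MeasureTheory ProbabilityTheory Filter Topology Set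
open scoped ENNReal RealInnerProductSpace

noncomputable section

abbrev Euc (d : ℕ) := EuclideanSpace ℝ (Fin d)

/-- Density of the Gaussian with mean `x` and identity covariance. -/
def gaussDensity {d : ℕ} (x y : Euc d) : ℝ :=
  (2 * Real.pi) ^ (-(d : ℝ) / 2) * Real.exp (-‖y - x‖ ^ 2 / 2)

/-- Gaussian measure with mean `x` and identity covariance. -/
def gaussian {d : ℕ} (x : Euc d) : Measure (Euc d) :=
  volume.withDensity fun y => ENNReal.ofReal (gaussDensity x y)

/-- Finite second moment. -/
def FiniteSecondMoment {d : ℕ} (μ : Measure (Euc d)) : Prop :=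
  ∫⁻ x, ENNReal.ofReal (‖x‖ ^ 2) ∂μ < ⊤

/-- Barycenter of a measure. -/
def bary {d : ℕ} (μ : Measure (Euc d)) : Euc d := ∫ x, x ∂μ

open Classical in
/-- Relative entropy `H(ρ | η)`, valued in `ℝ≥0∞`. -/
def relEnt {d : ℕ} (ρ η : Measure (Euc d)) : ℝ≥0∞ :=
  if ρ ≪ η ∧ Integrable (fun x => Real.log (ρ.rnDeriv η x).toReal) ρ then
    ENNReal.ofReal (∫ x, Real.log (ρ.rnDeriv η x).toReal ∂ρ)
  else ⊤

/-- Squared 2-Wasserstein distance. -/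
def W2sq {d : ℕ} (μ ν : Measure (Euc d)) : ℝ≥0∞ :=
  ⨅ (π : Measure (Euc d × Euc d)) (_ : π.fst = μ ∧ π.snd = ν),
    ∫⁻ p, ENNReal.ofReal (‖p.1 - p.2‖ ^ 2) ∂π


/-- Static Schrödinger--Bass cost `C^β(x, η)`. -/
def SBcost {d : ℕ} (β : ℝ) (x : Euc d) (η : Measure (Euc d)) : ℝ≥0∞ :=
  ⨅ (κ : Measure (Euc d))
      (_ : IsProbabilityMeasure κ ∧ FiniteSecondMoment κ ∧ bary κ = bary η),
    relEnt κ (gaussian x) + ENNReal.ofReal (β / 2) * W2sq κ η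

/-!
Since `γ_x` is a tilting of `γ_m` by an affine function, `H(κ | γ_x)` is `H(κ | γ_m)` plus
`½|m - x|²` whenever `κ` has barycenter `m`. What remains is a penalised problem
`inf_κ (H(κ | γ_m) + t W₂²(κ, η))` with `t = β / 2 → 0`. The competitor `κ = γ_m`, of zero entropy,
gives the upper bound. For the lower bound, competitors whose entropy stays away from `0` are too
expensive for small `t`. By the Donsker–Varadhan inequality on events, entropy tending to `0` forces
both tightness and weak convergence to `γ_m`, and on tight sets `W₂²` is lower semicontinuous since
the couplings are relatively compact by Prokhorov's theorem.
-/

section Entropy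

variable {α : Type*} [MeasurableSpace α]

open InformationTheory

theorem mul_le_klFun_add_exp_sub_one {x : ℝ} (hx : 0 ≤ x) (M : ℝ) :
    M * x ≤ klFun x + (Real.exp M - 1) := by
  rcases hx.eq_or_lt with rfl | hx
  · simpa [klFun_zero] using (Real.exp_pos M).le
  have tangent : x * (M - Real.log x + 1) ≤ Real.exp M :=
    calc x * (M - Real.log x + 1) ≤ x * Real.exp (M - Real.log x) := by
          gcongr; exact Real.add_one_le_exp _
      _ = Real.exp M := by rw [Real.exp_sub, Real.exp_log hx]; field_simp
  rw [klFun]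
  linarith

/-- The Donsker–Varadhan inequality for the test function `M * 𝟙_s`. -/
theorem ofReal_mul_measure_le_klDiv_add (μ ν : Measure α) [IsFiniteMeasure μ] [IsFiniteMeasure ν]
    (M : ℝ) (s : Set α) :
    ENNReal.ofReal M * μ s ≤ klDiv μ ν + ENNReal.ofReal (Real.exp M - 1) * ν s := by
  by_cases hac : μ ≪ ν
  swap; · simp [klDiv_of_not_ac hac]
  let t := toMeasurable ν s
  calc ENNReal.ofReal M * μ s ≤ ENNReal.ofReal M * μ t := by
        gcongr; exact subset_toMeasurable ν s
    _ = ∫⁻ x in t, ENNReal.ofReal M * μ.rnDeriv ν x ∂ν := by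
        rw [lintegral_const_mul _ (μ.measurable_rnDeriv ν), Measure.setLIntegral_rnDeriv hac]
    _ ≤ ∫⁻ x in t, ENNReal.ofReal (klFun (μ.rnDeriv ν x).toReal)
          + ENNReal.ofReal (Real.exp M - 1) ∂ν := by
        refine lintegral_mono_ae (ae_restrict_of_ae ?_)
        filter_upwards [μ.rnDeriv_lt_top ν] with x hx
        calc ENNReal.ofReal M * μ.rnDeriv ν x
            = ENNReal.ofReal (M * (μ.rnDeriv ν x).toReal) := by
              rw [ENNReal.ofReal_mul' ENNReal.toReal_nonneg, ENNReal.ofReal_toReal hx.ne]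
          _ ≤ _ := (ENNReal.ofReal_le_ofReal
              (mul_le_klFun_add_exp_sub_one ENNReal.toReal_nonneg M)).trans ENNReal.ofReal_add_le
    _ ≤ klDiv μ ν + ENNReal.ofReal (Real.exp M - 1) * ν s := by
        rw [lintegral_add_right _ measurable_const, setLIntegral_const, measure_toMeasurable,
          klDiv_eq_lintegral_klFun_of_ac hac]
        gcongr
        exact Measure.restrict_le_self

theorem isTightMeasureSet_setOf_klDiv_le [TopologicalSpace α] {ν : Measure α} [IsFiniteMeasure ν]
    (hν : IsTightMeasureSet {ν}) {C : ℝ≥0∞} (hC : C ≠ ⊤) :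
    IsTightMeasureSet {μ : Measure α | IsFiniteMeasure μ ∧ klDiv μ ν ≤ C} := by
  rw [isTightMeasureSet_iff_exists_isCompact_measure_compl_le] at hν ⊢
  intro ε hε
  obtain ⟨n, n_pos, hn⟩ := ENNReal.exists_nat_pos_mul_gt hε.ne'
    (ENNReal.add_ne_top.2 ⟨hC, ENNReal.one_ne_top⟩)
  have coeff_pos : 0 < ENNReal.ofReal (Real.exp n - 1) := by
    simpa using n_pos
  obtain ⟨K, hK, hνK⟩ := hν (ENNReal.ofReal (Real.exp n - 1))⁻¹ (by simp)
  refine ⟨K, hK, fun μ ⟨_, hμ⟩ => ?_⟩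
  have scaled : n * μ Kᶜ ≤ n * ε :=
    calc (n : ℝ≥0∞) * μ Kᶜ = ENNReal.ofReal n * μ Kᶜ := by rw [ENNReal.ofReal_natCast]
      _ ≤ klDiv μ ν + ENNReal.ofReal (Real.exp n - 1) * ν Kᶜ :=
        ofReal_mul_measure_le_klDiv_add μ ν n Kᶜ
      _ ≤ C + ENNReal.ofReal (Real.exp n - 1) * (ENNReal.ofReal (Real.exp n - 1))⁻¹ := by
        gcongr; exact hνK ν rfl
      _ = C + 1 := by rw [ENNReal.mul_inv_cancel coeff_pos.ne' ENNReal.ofReal_ne_top]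
      _ ≤ n * ε := hn.le
  exact (ENNReal.mul_le_mul_iff_right (by exact_mod_cast n_pos.ne') (ENNReal.natCast_ne_top n)).1
    scaled

theorem limsup_measure_le_of_tendsto_klDiv {ι : Type*} {l : Filter ι} {μ : ι → Measure α}
    [∀ i, IsFiniteMeasure (μ i)] {ν : Measure α} [IsFiniteMeasure ν]
    (h : Tendsto (fun i => klDiv (μ i) ν) l (𝓝 0)) (s : Set α) :
    limsup (fun i => μ i s) l ≤ ν s := by
  refine le_of_forall_gt_imp_ge_of_dense fun b hb => ?_
  have slope : Tendsto (fun M : ℝ => ENNReal.ofReal (M⁻¹ * (Real.exp M - 1)) * ν s) (𝓝[>] 0)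
      (𝓝 (ν s)) := by
    have deriv_zero : Tendsto (fun M : ℝ => M⁻¹ * (Real.exp M - 1)) (𝓝[>] 0) (𝓝 1) := by
      simpa using (Real.hasDerivAt_exp 0).tendsto_slope_zero_right
    simpa using ENNReal.Tendsto.mul_const (ENNReal.tendsto_ofReal deriv_zero) (b := ν s)
      (Or.inl (by simp))
  obtain ⟨M, hMb, M_pos⟩ := ((slope.eventually_lt_const hb).and self_mem_nhdsWithin).exists
  have bound (i : ι) : μ i s ≤
      ENNReal.ofReal M⁻¹ * klDiv (μ i) ν + ENNReal.ofReal (M⁻¹ * (Real.exp M - 1)) * ν s :=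
    calc μ i s = ENNReal.ofReal M⁻¹ * (ENNReal.ofReal M * μ i s) := by
          rw [← mul_assoc, ← ENNReal.ofReal_mul (inv_pos.2 M_pos).le, inv_mul_cancel₀ M_pos.ne',
            ENNReal.ofReal_one, one_mul]
      _ ≤ ENNReal.ofReal M⁻¹ * (klDiv (μ i) ν + ENNReal.ofReal (Real.exp M - 1) * ν s) := by
          gcongr; exact ofReal_mul_measure_le_klDiv_add _ _ _ _
      _ = _ := by
          rw [mul_add, ← mul_assoc, ENNReal.ofReal_mul (inv_pos.2 M_pos).le]
  have bound_tendsto : Tendsto (fun i => ENNReal.ofReal M⁻¹ * klDiv (μ i) ν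
      + ENNReal.ofReal (M⁻¹ * (Real.exp M - 1)) * ν s) l
      (𝓝 (ENNReal.ofReal (M⁻¹ * (Real.exp M - 1)) * ν s)) := by
    simpa using (ENNReal.Tendsto.const_mul h (Or.inr ENNReal.ofReal_ne_top)).add_const _
  exact limsup_le_of_le
    (h := (bound_tendsto.eventually_lt_const hMb).mono fun i hi => (bound i).trans hi.le)

theorem tendsto_of_tendsto_klDiv [TopologicalSpace α] [OpensMeasurableSpace α] {ι : Type*}
    {l : Filter ι} [l.IsCountablyGenerated] {μ : ι → ProbabilityMeasure α}
    {ν : ProbabilityMeasure α}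
    (h : Tendsto (fun i => klDiv (μ i : Measure α) ν) l (𝓝 0)) : Tendsto μ l (𝓝 ν) :=
  tendsto_of_forall_isClosed_limsup_le' fun F _ => limsup_measure_le_of_tendsto_klDiv h F

end Entropy

section Transport

open InformationTheory

theorem lowerSemicontinuous_lintegral {Ω : Type*} [MeasurableSpace Ω] [TopologicalSpace Ω]
    [OpensMeasurableSpace Ω] {c : Ω → ℝ≥0∞} (hc : Continuous c) :
    LowerSemicontinuous fun π : ProbabilityMeasure Ω => ∫⁻ p, c p ∂(π : Measure Ω) := by
  have trunc_ne_top (n : ℕ) (p : Ω) : min (c p) n ≠ ⊤ :=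
    ((min_le_right _ _).trans_lt (ENNReal.natCast_lt_top n)).ne
  have trunc_le (n : ℕ) (p : Ω) : (min (c p) n).toNNReal ≤ n := by
    simpa using ENNReal.toNNReal_mono (ENNReal.natCast_ne_top n) (min_le_right (c p) n)
  let trunc (n : ℕ) : BoundedContinuousFunction Ω NNReal :=
    BoundedContinuousFunction.mkOfBound
      ⟨fun p => (min (c p) n).toNNReal, ENNReal.continuousOn_toNNReal.comp_continuous
        (hc.min continuous_const) (trunc_ne_top n)⟩ n fun p q =>
      abs_sub_le_of_nonneg_of_le (NNReal.coe_nonneg _) (trunc_le n p) (NNReal.coe_nonneg _)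
        (trunc_le n q)
  have coe_trunc (n : ℕ) (p : Ω) : (trunc n p : ℝ≥0∞) = min (c p) n :=
    ENNReal.coe_toNNReal (trunc_ne_top n p)
  have iSup_trunc (p : Ω) : ⨆ n, (trunc n p : ℝ≥0∞) = c p := by
    simp_rw [coe_trunc, ← inf_iSup_eq, ENNReal.iSup_natCast, inf_top_eq]
  have lintegral_eq (π : ProbabilityMeasure Ω) :
      ∫⁻ p, c p ∂(π : Measure Ω) = ⨆ n, ∫⁻ p, trunc n p ∂(π : Measure Ω) := by
    simp_rw [← iSup_trunc]
    refine lintegral_iSup (fun n => ?_) fun m n hmn p => ?_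
    · exact (ENNReal.continuous_coe.comp (trunc n).continuous).measurable
    · rw [coe_trunc, coe_trunc]; gcongr
  simp_rw [lintegral_eq]
  exact lowerSemicontinuous_iSup fun n => Continuous.lowerSemicontinuous <|
    continuous_iff_continuousAt.2 fun π =>
      ProbabilityMeasure.tendsto_iff_forall_lintegral_tendsto.1 tendsto_id (trunc n)

variable {X Y : Type*} [MeasurableSpace X] [MeasurableSpace Y]

/-- The Kantorovich optimal transport cost from `μ` to `ν` for the cost function `c`. -/
def transportCost (c : X × Y → ℝ≥0∞) (μ : Measure X) (ν : Measure Y) : ℝ≥0∞ :=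
  ⨅ (π : Measure (X × Y)) (_ : π.fst = μ ∧ π.snd = ν), ∫⁻ p, c p ∂π

/-- The pair of marginals of a probability measure on a product space. -/
def marginals (π : ProbabilityMeasure (X × Y)) : ProbabilityMeasure X × ProbabilityMeasure Y :=
  (π.map measurable_fst.aemeasurable, π.map measurable_snd.aemeasurable)

theorem transportCost_eq_iInf_marginals_eq (c : X × Y → ℝ≥0∞)
    (q : ProbabilityMeasure X × ProbabilityMeasure Y) :
    transportCost c q.1 q.2 =
      ⨅ (π : ProbabilityMeasure (X × Y)) (_ : marginals π = q),
        ∫⁻ p, c p ∂(π : Measure (X × Y)) := by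
  refine le_antisymm (le_iInf₂ fun π hπ => iInf₂_le (π : Measure (X × Y)) ?_)
    (le_iInf₂ fun π hπ => ?_)
  · exact hπ ▸ ⟨rfl, rfl⟩
  · have isProb : IsProbabilityMeasure π := ⟨by rw [← Measure.fst_univ, hπ.1, measure_univ]⟩
    exact iInf₂_le (⟨π, isProb⟩ : ProbabilityMeasure (X × Y))
      (Prod.ext (Subtype.ext hπ.1) (Subtype.ext hπ.2))

variable [TopologicalSpace X] [TopologicalSpace Y]

theorem continuous_marginals [OpensMeasurableSpace (X × Y)] [BorelSpace X] [BorelSpace Y] :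
    Continuous (marginals (X := X) (Y := Y)) :=
  (ProbabilityMeasure.continuous_map continuous_fst).prodMk
    (ProbabilityMeasure.continuous_map continuous_snd)

theorem isCompact_closure_marginals_preimage [T2Space X] [T2Space Y] [BorelSpace (X × Y)]
    {S : Set (ProbabilityMeasure X)} {T : Set (ProbabilityMeasure Y)}
    (hS : IsTightMeasureSet {(μ : Measure X) | μ ∈ S})
    (hT : IsTightMeasureSet {(ν : Measure Y) | ν ∈ T}) :
    IsCompact (closure (marginals ⁻¹' (S ×ˢ T))) := by
  refine isCompact_closure_of_isTightMeasureSet (IsTightMeasureSet.prodMk ?_ ?_)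
  · refine hS.subset ?_
    rintro _ ⟨_, ⟨π, hπ, rfl⟩, rfl⟩
    exact ⟨_, hπ.1, rfl⟩
  · refine hT.subset ?_
    rintro _ ⟨_, ⟨π, hπ, rfl⟩, rfl⟩
    exact ⟨_, hπ.2, rfl⟩

theorem lowerSemicontinuousOn_transportCost [T2Space X] [T2Space Y] [BorelSpace X] [BorelSpace Y]
    [HasOuterApproxClosed X] [HasOuterApproxClosed Y] [BorelSpace (X × Y)]
    {c : X × Y → ℝ≥0∞} (hc : Continuous c)
    {S : Set (ProbabilityMeasure X)} {T : Set (ProbabilityMeasure Y)}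
    (hS : IsTightMeasureSet {(μ : Measure X) | μ ∈ S})
    (hT : IsTightMeasureSet {(ν : Measure Y) | ν ∈ T}) :
    LowerSemicontinuousOn
      (fun q : ProbabilityMeasure X × ProbabilityMeasure Y => transportCost c q.1 q.2)
      (S ×ˢ T) := by
  intro q hq a ha
  obtain ⟨b, hab, hbq⟩ := exists_between ha
  let cheap : Set (ProbabilityMeasure (X × Y)) :=
    closure (marginals ⁻¹' (S ×ˢ T)) ∩ {π | ∫⁻ p, c p ∂(π : Measure (X × Y)) ≤ b}
  have isClosed_image : IsClosed (marginals '' cheap) :=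
    (((isCompact_closure_marginals_preimage hS hT).inter_right
      ((lowerSemicontinuous_lintegral hc).isClosed_preimage b)).image
        continuous_marginals).isClosed
  have q_notMem : q ∉ marginals '' cheap := by
    rintro ⟨π, ⟨-, hπ⟩, rfl⟩
    exact hbq.not_ge ((transportCost_eq_iInf_marginals_eq c _).trans_le
      (iInf₂_le_of_le π rfl hπ))
  filter_upwards [self_mem_nhdsWithin,
    mem_nhdsWithin_of_mem_nhds (isClosed_image.isOpen_compl.mem_nhds q_notMem)] with r hr r_notMem
  rw [transportCost_eq_iInf_marginals_eq]
  refine hab.trans_le (le_iInf₂ ?_)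
  rintro π rfl
  exact le_of_not_ge fun hπb => r_notMem ⟨π, ⟨subset_closure hr, hπb⟩, rfl⟩

theorem eventually_lt_transportCost_of_klDiv [T2Space X] [T2Space Y] [BorelSpace X] [BorelSpace Y]
    [HasOuterApproxClosed X] [HasOuterApproxClosed Y] [BorelSpace (X × Y)]
    {c : X × Y → ℝ≥0∞} (hc : Continuous c) {γ : ProbabilityMeasure X} {η : ProbabilityMeasure Y}
    (hγ : IsTightMeasureSet {(γ : Measure X)}) (hη : IsTightMeasureSet {(η : Measure Y)})
    {a : ℝ≥0∞} (ha : a < transportCost c γ η) :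
    ∀ᶠ κ : ProbabilityMeasure X in
      comap (fun κ => klDiv (κ : Measure X) γ) (𝓝 0),
        a < transportCost c κ η := by
  let sublevel : Set (ProbabilityMeasure X) :=
    {κ | klDiv (κ : Measure X) γ ≤ 1}
  have tight_sublevel : IsTightMeasureSet {(κ : Measure X) | κ ∈ sublevel} := by
    refine (isTightMeasureSet_setOf_klDiv_le hγ ENNReal.one_ne_top).subset ?_
    rintro _ ⟨κ, hκ, rfl⟩
    exact ⟨inferInstance, hκ⟩
  have lsc := lowerSemicontinuousOn_transportCost hc tight_sublevel (T := {η}) (by simpa using hη)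
    (γ, η) ⟨by simp [sublevel], rfl⟩ a ha
  have klDiv_tendsto := tendsto_comap (x := 𝓝 0) (f := fun κ : ProbabilityMeasure X =>
    klDiv (κ : Measure X) γ)
  refine Tendsto.eventually (f := fun κ => (κ, η)) (tendsto_nhdsWithin_iff.2 ⟨?_, ?_⟩) lsc
  · exact (tendsto_of_tendsto_klDiv klDiv_tendsto).prodMk_nhds tendsto_const_nhds
  · exact (klDiv_tendsto.eventually_le_const one_pos).mono fun κ hκ => ⟨hκ, rfl⟩

end Transport

section Penalisation

theorem tendsto_rescaled_iInf_add {α : Type*} {H W : α → ℝ≥0∞} {x₀ : α} (hH : H x₀ = 0)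
    (hW : ∀ a < W x₀, ∀ᶠ x in comap H (𝓝 0), a < W x) :
    Tendsto (fun t : ℝ => ENNReal.ofReal (1 / t) * ⨅ x, (H x + ENNReal.ofReal t * W x))
      (𝓝[>] 0) (𝓝 (W x₀)) := by
  have cancel {t : ℝ} (ht : 0 < t) (w : ℝ≥0∞) :
      ENNReal.ofReal (1 / t) * (ENNReal.ofReal t * w) = w := by
    rw [← mul_assoc, ← ENNReal.ofReal_mul (by positivity), one_div_mul_cancel ht.ne',
      ENNReal.ofReal_one, one_mul]
  refine tendsto_order.2 ⟨fun a ha => ?_, fun a ha => ?_⟩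
  · obtain ⟨b, hab, hb⟩ := exists_between ha
    obtain ⟨h, h_pos, W_gt⟩ : ∃ h > 0, ∀ x, H x < h → b < W x :=
      (ENNReal.nhds_zero_basis.comap H).eventually_iff.1 (hW b hb)
    have small : ∀ᶠ t : ℝ in 𝓝[>] 0, ENNReal.ofReal t * b < h := by
      have : Tendsto (fun t : ℝ => ENNReal.ofReal t * b) (𝓝 0) (𝓝 0) := by
        simpa using ENNReal.Tendsto.mul_const (b := b)
          (ENNReal.continuous_ofReal.tendsto 0) (Or.inr hb.ne_top)
      exact (this.mono_left nhdsWithin_le_nhds).eventually_lt_const h_pos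
    filter_upwards [small, self_mem_nhdsWithin] with t ht t_pos
    have lower (x : α) : ENNReal.ofReal t * b ≤ H x + ENNReal.ofReal t * W x := by
      rcases lt_or_ge (H x) h with hx | hx
      · exact le_add_left (by gcongr; exact (W_gt x hx).le)
      · exact le_add_right (ht.le.trans hx)
    calc a < b := hab
      _ = ENNReal.ofReal (1 / t) * (ENNReal.ofReal t * b) := (cancel t_pos b).symm
      _ ≤ _ := by gcongr; exact le_iInf lower
  · filter_upwards [self_mem_nhdsWithin] with t t_pos
    calc ENNReal.ofReal (1 / t) * ⨅ x, (H x + ENNReal.ofReal t * W x)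
        ≤ ENNReal.ofReal (1 / t) * (H x₀ + ENNReal.ofReal t * W x₀) := by
          gcongr; exact iInf_le _ x₀
      _ = W x₀ := by rw [hH, zero_add, cancel t_pos]
      _ < a := ha

end Penalisation

section EntropyTilted

open InformationTheory

theorem klDiv_tilted_right {α : Type*} [MeasurableSpace α] {μ ν : Measure α}
    [IsProbabilityMeasure μ] [IsProbabilityMeasure ν] {f : α → ℝ} (hfμ : Integrable f μ)
    (hfν : Integrable (fun x => Real.exp (f x)) ν)
    (hle : ∫ x, f x ∂μ ≤ Real.log (∫ x, Real.exp (f x) ∂ν)) :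
    klDiv μ (ν.tilted f) =
      klDiv μ ν + ENNReal.ofReal (Real.log (∫ x, Real.exp (f x) ∂ν) - ∫ x, f x ∂μ) := by
  have := isProbabilityMeasure_tilted hfν
  by_cases hac : μ ≪ ν
  swap
  · have hac_tilted : ¬ μ ≪ ν.tilted f := fun h => hac (h.trans (tilted_absolutelyContinuous ν f))
    rw [klDiv_of_not_ac hac, klDiv_of_not_ac hac_tilted, top_add]
  have hac_tilted : μ ≪ ν.tilted f := hac.trans (absolutelyContinuous_tilted hfν)
  by_cases hint : Integrable (llr μ ν) μ
  swap
  · have hint_tilted : ¬ Integrable (llr μ (ν.tilted f)) μ := fun h => hint <| by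
      have llr_eq : llr μ ν =ᵐ[μ] fun x =>
          llr μ (ν.tilted f) x + (f x - Real.log (∫ z, Real.exp (f z) ∂ν)) := by
        filter_upwards [llr_tilted_right hac hfν] with x hx
        rw [hx]; ring
      exact (integrable_congr llr_eq).2 (h.add (hfμ.sub (integrable_const _)))
    rw [klDiv_of_not_integrable hint, klDiv_of_not_integrable hint_tilted, top_add]
  have llr_nonneg : 0 ≤ ∫ x, llr μ ν x ∂μ := by
    simpa using integral_llr_add_sub_measure_univ_nonneg hac hint
  rw [klDiv_of_ac_of_integrable hac_tilted (integrable_llr_tilted_right hac hfμ hint hfν),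
    klDiv_of_ac_of_integrable hac hint, integral_llr_tilted_right hac hfμ hfν hint]
  simp only [probReal_univ, add_sub_cancel_right]
  rw [← ENNReal.ofReal_add llr_nonneg (sub_nonneg.2 hle)]
  congr 1
  ring

end EntropyTilted

section Gaussian

open InformationTheory

variable {d : ℕ}

theorem gaussDensity_pos (x y : Euc d) : 0 < gaussDensity x y := by
  unfold gaussDensity
  positivity

@[fun_prop]
theorem measurable_gaussDensity (x : Euc d) : Measurable (gaussDensity x) := by
  unfold gaussDensity
  fun_prop

theorem integral_gaussian_eq_integral_smul {E : Type*} [NormedAddCommGroup E] [NormedSpace ℝ E]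
    (x : Euc d) (g : Euc d → E) :
    ∫ y, g y ∂(gaussian x) = ∫ y, gaussDensity x y • g y := by
  rw [gaussian, integral_withDensity_eq_integral_toReal_smul (by fun_prop) (by simp)]
  simp only [ENNReal.toReal_ofReal (gaussDensity_pos x _).le]

theorem integrable_gaussDensity (x : Euc d) : Integrable (gaussDensity x) := by
  have integrable_exp : Integrable fun z : Euc d => Real.exp (-(1 / 2) * ‖z‖ ^ 2) := by
    refine .of_integral_ne_zero ?_
    rw [GaussianFourier.integral_rexp_neg_mul_sq_norm one_half_pos]
    positivity
  refine ((integrable_exp.comp_sub_right x).const_mul ((2 * Real.pi) ^ (-(d : ℝ) / 2))).congr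
    (ae_of_all _ fun y => ?_)
  simp only [gaussDensity]
  ring_nf

instance isFiniteMeasure_gaussian (x : Euc d) : IsFiniteMeasure (gaussian x) :=
  isFiniteMeasure_withDensity_ofReal (integrable_gaussDensity x).2

theorem charFun_gaussian (x t : Euc d) :
    charFun (gaussian x) t = Complex.exp (⟪t, x⟫ * Complex.I - ‖t‖ ^ 2 / 2) := by
  have integrand_shift (z : Euc d) :
      gaussDensity x (z + x) • Complex.exp (⟪z + x, t⟫ * Complex.I) =
        (2 * Real.pi : ℂ) ^ (-(d : ℂ) / 2) * Complex.exp (⟪t, x⟫ * Complex.I) *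
          Complex.exp (-(1 / 2) * ‖z‖ ^ 2 + Complex.I * ⟪t, z⟫) := by
    have cast_const : (((2 * Real.pi) ^ (-(d : ℝ) / 2) : ℝ) : ℂ) =
        (2 * Real.pi : ℂ) ^ (-(d : ℂ) / 2) := by
      rw [Complex.ofReal_cpow (by positivity)]; push_cast; rfl
    rw [gaussDensity, add_sub_cancel_right, Complex.real_smul, Complex.ofReal_mul, cast_const,
      Complex.ofReal_exp, mul_assoc, mul_assoc, ← Complex.exp_add, ← Complex.exp_add,
      real_inner_comm, inner_add_right]
    push_cast
    ring_nf
  have two_pi_ne_zero : (2 * Real.pi : ℂ) ≠ 0 := by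
    exact_mod_cast Real.two_pi_pos.ne'
  rw [charFun_apply, integral_gaussian_eq_integral_smul, ← integral_add_right_eq_self _ x]
  simp_rw [integrand_shift]
  rw [integral_const_mul, GaussianFourier.integral_cexp_neg_mul_sq_norm_add (by norm_num),
    finrank_euclideanSpace_fin, div_div_eq_mul_div, div_one, mul_comm (Real.pi : ℂ) 2, neg_div,
    Complex.cpow_neg, mul_mul_mul_comm,
    inv_mul_cancel₀ (by simp [Complex.cpow_eq_zero_iff, two_pi_ne_zero]), one_mul,
    ← Complex.exp_add, Complex.I_sq]
  ring_nf

theorem gaussian_eq_multivariateGaussian (x : Euc d) :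
    gaussian x = multivariateGaussian x 1 := by
  refine Measure.ext_of_charFun (funext fun t => ?_)
  have dotProduct_self : t.ofLp ⬝ᵥ t.ofLp = ‖t‖ ^ 2 := by
    rw [EuclideanSpace.real_norm_sq_eq]
    simp only [dotProduct, sq]
  rw [charFun_gaussian, charFun_multivariateGaussian Matrix.PosSemidef.one, Matrix.one_mulVec,
    dotProduct_self, Complex.ofReal_pow]

instance isGaussian_gaussian (x : Euc d) : IsGaussian (gaussian x) := by
  rw [gaussian_eq_multivariateGaussian]
  infer_instance

theorem bary_gaussian (x : Euc d) : bary (gaussian x) = x := by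
  rw [bary, gaussian_eq_multivariateGaussian, integral_id_multivariateGaussian]

theorem finiteSecondMoment_iff_memLp_id {μ : Measure (Euc d)} :
    FiniteSecondMoment μ ↔ MemLp id 2 μ := by
  rw [memLp_two_iff_integrable_sq_norm aestronglyMeasurable_id, FiniteSecondMoment,
    lt_top_iff_ne_top]
  exact lintegral_ofReal_ne_top_iff_integrable (by fun_prop) (ae_of_all _ fun x => by positivity)

theorem finiteSecondMoment_gaussian (x : Euc d) : FiniteSecondMoment (gaussian x) :=
  finiteSecondMoment_iff_memLp_id.2 IsGaussian.memLp_two_id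

theorem FiniteSecondMoment.integrable_id {μ : Measure (Euc d)} [IsFiniteMeasure μ]
    (hμ : FiniteSecondMoment μ) : Integrable (fun y => y) μ :=
  (finiteSecondMoment_iff_memLp_id.1 hμ).integrable one_le_two

/-- The logarithm of the density of `gaussian x` with respect to `gaussian m`. -/
def gaussianLogRatio (m x y : Euc d) : ℝ := ⟪x - m, y - m⟫ - ‖x - m‖ ^ 2 / 2

@[fun_prop]
theorem measurable_gaussianLogRatio (m x : Euc d) : Measurable (gaussianLogRatio m x) := by
  unfold gaussianLogRatio
  fun_prop

theorem gaussDensity_mul_exp_gaussianLogRatio (m x y : Euc d) :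
    gaussDensity m y * Real.exp (gaussianLogRatio m x y) = gaussDensity x y := by
  have norm_sq : ‖y - x‖ ^ 2 = ‖y - m‖ ^ 2 - 2 * ⟪x - m, y - m⟫ + ‖x - m‖ ^ 2 := by
    rw [← sub_sub_sub_cancel_right y x m, norm_sub_sq_real, real_inner_comm]
  rw [gaussDensity, gaussDensity, mul_assoc, ← Real.exp_add, gaussianLogRatio, norm_sq]
  congr 2
  ring

theorem gaussian_withDensity_exp_gaussianLogRatio (m x : Euc d) :
    (gaussian m).withDensity (fun y => ENNReal.ofReal (Real.exp (gaussianLogRatio m x y))) =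
      gaussian x := by
  rw [gaussian, ← withDensity_mul _ (by fun_prop) (by fun_prop), gaussian]
  congr 1 with y
  rw [Pi.mul_apply, ← ENNReal.ofReal_mul (gaussDensity_pos m y).le,
    gaussDensity_mul_exp_gaussianLogRatio]

theorem lintegral_exp_gaussianLogRatio (m x : Euc d) :
    ∫⁻ y, ENNReal.ofReal (Real.exp (gaussianLogRatio m x y)) ∂(gaussian m) = 1 := by
  rw [← setLIntegral_univ, ← withDensity_apply _ MeasurableSet.univ,
    gaussian_withDensity_exp_gaussianLogRatio, measure_univ]

theorem integrable_exp_gaussianLogRatio (m x : Euc d) :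
    Integrable (fun y => Real.exp (gaussianLogRatio m x y)) (gaussian m) := by
  refine (lintegral_ofReal_ne_top_iff_integrable (by fun_prop)
    (ae_of_all _ fun y => (Real.exp_pos _).le)).1 ?_
  simp [lintegral_exp_gaussianLogRatio]

theorem integral_exp_gaussianLogRatio (m x : Euc d) :
    ∫ y, Real.exp (gaussianLogRatio m x y) ∂(gaussian m) = 1 := by
  rw [integral_eq_lintegral_of_nonneg_ae (ae_of_all _ fun y => (Real.exp_pos _).le)
    (integrable_exp_gaussianLogRatio m x).1, lintegral_exp_gaussianLogRatio, ENNReal.toReal_one]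

theorem gaussian_tilted_gaussianLogRatio (m x : Euc d) :
    (gaussian m).tilted (gaussianLogRatio m x) = gaussian x := by
  simp only [Measure.tilted, integral_exp_gaussianLogRatio, div_one,
    gaussian_withDensity_exp_gaussianLogRatio]

theorem integral_gaussianLogRatio {κ : Measure (Euc d)} [IsProbabilityMeasure κ]
    (hκ : Integrable (fun y => y) κ) (x : Euc d) :
    ∫ y, gaussianLogRatio (bary κ) x y ∂κ = -(1 / 2 * ‖bary κ - x‖ ^ 2) := by
  have integrable_sub : Integrable (fun y => y - bary κ) κ := hκ.sub (integrable_const (bary κ))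
  have integral_sub_bary : ∫ y, (y - bary κ) ∂κ = 0 := by
    rw [integral_sub hκ (integrable_const _), integral_const, probReal_univ, one_smul,
      bary, sub_self]
  simp only [gaussianLogRatio]
  rw [integral_sub (integrable_sub.const_inner _) (integrable_const _),
    integral_inner integrable_sub, integral_sub_bary, inner_zero_right, integral_const,
    probReal_univ, one_smul, norm_sub_rev]
  ring

theorem relEnt_eq_klDiv (μ ν : Measure (Euc d)) [IsProbabilityMeasure μ] [IsProbabilityMeasure ν] :
    relEnt μ ν = klDiv μ ν := by
  simp only [relEnt, klDiv_def, llr_def, probReal_univ, add_sub_cancel_right]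
  congr

theorem relEnt_gaussian_eq_relEnt_gaussian_bary_add {κ : Measure (Euc d)} [IsProbabilityMeasure κ]
    (hκ : Integrable (fun y => y) κ) (x : Euc d) :
    relEnt κ (gaussian x) =
      relEnt κ (gaussian (bary κ)) + ENNReal.ofReal (1 / 2 * ‖bary κ - x‖ ^ 2) := by
  have integrable_logRatio : Integrable (gaussianLogRatio (bary κ) x) κ :=
    ((hκ.sub (integrable_const _)).const_inner _).sub (integrable_const _)
  have log_mass :
      Real.log (∫ y, Real.exp (gaussianLogRatio (bary κ) x y) ∂(gaussian (bary κ))) = 0 := by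
    rw [integral_exp_gaussianLogRatio, Real.log_one]
  rw [relEnt_eq_klDiv, relEnt_eq_klDiv, ← gaussian_tilted_gaussianLogRatio (bary κ) x,
    klDiv_tilted_right integrable_logRatio (integrable_exp_gaussianLogRatio _ _), log_mass,
    integral_gaussianLogRatio hκ, zero_sub, neg_neg]
  rw [log_mass, integral_gaussianLogRatio hκ]
  exact neg_nonpos.2 (by positivity)

end Gaussian

section PrescribedMean

open InformationTheory

variable {d : ℕ}

/-- The Schrödinger–Bass cost with the competitors' barycenter prescribed to be `m`, which need not
be the barycenter of the target `η`. -/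
def prescribedMeanSBcost (β : ℝ) (x m : Euc d) (η : Measure (Euc d)) : ℝ≥0∞ :=
  ⨅ (κ : Measure (Euc d)) (_ : IsProbabilityMeasure κ ∧ FiniteSecondMoment κ ∧ bary κ = m),
    relEnt κ (gaussian x) + ENNReal.ofReal (β / 2) * W2sq κ η

theorem prescribedMeanSBcost_eq_self_add (β : ℝ) (x m : Euc d) (η : Measure (Euc d)) :
    prescribedMeanSBcost β x m η =
      prescribedMeanSBcost β m m η + ENNReal.ofReal (1 / 2 * ‖m - x‖ ^ 2) := by
  simp only [prescribedMeanSBcost, ENNReal.iInf_add]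
  refine iInf_congr fun κ => iInf_congr ?_
  rintro ⟨_, hκ, rfl⟩
  rw [relEnt_gaussian_eq_relEnt_gaussian_bary_add hκ.integrable_id, add_right_comm]

theorem prescribedMeanSBcost_self_eq_iInf_subtype (β : ℝ) (m : Euc d) (η : Measure (Euc d)) :
    prescribedMeanSBcost β m m η =
      ⨅ κ : {κ : ProbabilityMeasure (Euc d) //
          FiniteSecondMoment (κ : Measure (Euc d)) ∧ bary (κ : Measure (Euc d)) = m},
        (klDiv (κ.1 : Measure (Euc d)) (gaussian m)
          + ENNReal.ofReal (β / 2) * W2sq (κ.1 : Measure (Euc d)) η) := by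
  refine le_antisymm (le_iInf fun κ => ?_) (le_iInf₂ fun κ => ?_)
  · rw [← relEnt_eq_klDiv]
    exact iInf₂_le (κ.1 : Measure (Euc d)) ⟨inferInstance, κ.2⟩
  · rintro ⟨isProb, hκ⟩
    rw [relEnt_eq_klDiv]
    exact iInf_le_of_le ⟨⟨κ, isProb⟩, hκ⟩ le_rfl

theorem tendsto_rescaled_prescribedMeanSBcost_self (m : Euc d) (η : Measure (Euc d))
    [IsProbabilityMeasure η] :
    Tendsto (fun β : ℝ => ENNReal.ofReal (1 / β) * prescribedMeanSBcost β m m η) (𝓝[>] 0)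
      (𝓝 (ENNReal.ofReal (1 / 2) * W2sq (gaussian m) η)) := by
  let γ : {κ : ProbabilityMeasure (Euc d) //
      FiniteSecondMoment (κ : Measure (Euc d)) ∧ bary (κ : Measure (Euc d)) = m} :=
    ⟨⟨gaussian m, inferInstance⟩, finiteSecondMoment_gaussian m, bary_gaussian m⟩
  have W2sq_lsc : ∀ a < W2sq (gaussian m) η, ∀ᶠ κ : ProbabilityMeasure (Euc d) in
      comap (fun κ => klDiv (κ : Measure (Euc d)) (gaussian m)) (𝓝 0),
        a < W2sq (κ : Measure (Euc d)) η := fun a ha =>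
    eventually_lt_transportCost_of_klDiv (γ := γ.1) (η := ⟨η, inferInstance⟩)
      (c := fun p => ENNReal.ofReal (‖p.1 - p.2‖ ^ 2)) 
      (ENNReal.continuous_ofReal.comp (by fun_prop))
      (isTightMeasureSet_singleton (μ := gaussian m)) (isTightMeasureSet_singleton (μ := η)) ha
  have vanishing_penalty := tendsto_rescaled_iInf_add (x₀ := γ)
    (H := fun κ => klDiv (κ.1 : Measure (Euc d)) (gaussian m))
    (W := fun κ => W2sq (κ.1 : Measure (Euc d)) η) (klDiv_self _)
    fun a ha => by
      simpa only [comap_comap, Function.comp_def] using (W2sq_lsc a ha).comap Subtype.val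
  have half_tendsto : Tendsto (fun β : ℝ => β / 2) (𝓝[>] 0) (𝓝[>] 0) := by
    refine tendsto_nhdsWithin_iff.2 ⟨?_, ?_⟩
    · exact tendsto_nhdsWithin_of_tendsto_nhds
        ((continuous_id.div_const 2).tendsto' 0 0 (zero_div 2))
    · exact eventually_mem_nhdsWithin.mono fun β (hβ : 0 < β) => half_pos hβ
  refine (ENNReal.Tendsto.const_mul (vanishing_penalty.comp half_tendsto)
    (Or.inr ENNReal.ofReal_ne_top) (a := ENNReal.ofReal (1 / 2))).congr fun β => ?_
  rw [Function.comp_apply, ← prescribedMeanSBcost_self_eq_iInf_subtype, ← mul_assoc,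
    ← ENNReal.ofReal_mul one_half_pos.le]
  congr 2
  ring

theorem tendsto_rescaled_prescribedMeanSBcost_of_ne {x m : Euc d} (hmx : m ≠ x)
    (η : Measure (Euc d)) :
    Tendsto (fun β : ℝ => ENNReal.ofReal (1 / β) * prescribedMeanSBcost β x m η) (𝓝[>] 0)
      (𝓝 ⊤) := by
  have displacement_ne_zero : ENNReal.ofReal (1 / 2 * ‖m - x‖ ^ 2) ≠ 0 := by
    have := norm_pos_iff.2 (sub_ne_zero.2 hmx)
    exact (ENNReal.ofReal_pos.2 (by positivity)).ne'
  have inv_tendsto : Tendsto (fun β : ℝ => ENNReal.ofReal (1 / β)) (𝓝[>] 0) (𝓝 ⊤) := by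
    simp only [one_div]
    exact ENNReal.tendsto_ofReal_atTop.comp tendsto_inv_nhdsGT_zero
  have lower_tendsto := ENNReal.Tendsto.mul_const (b := ENNReal.ofReal (1 / 2 * ‖m - x‖ ^ 2))
    inv_tendsto (Or.inl ENNReal.top_ne_zero)
  rw [ENNReal.top_mul displacement_ne_zero] at lower_tendsto
  refine tendsto_nhds_top_mono' lower_tendsto fun β => ?_
  rw [prescribedMeanSBcost_eq_self_add]
  gcongr
  exact le_add_self

theorem SBcost_rescaled_limit_general (x m : Euc d) (η : Measure (Euc d))
    [IsProbabilityMeasure η] :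
    Tendsto
      (fun β : ℝ => ENNReal.ofReal (1 / β)
        * (prescribedMeanSBcost β x m η - ENNReal.ofReal (1 / 2 * ‖m - x‖ ^ 2)))
      (𝓝[>] 0) (𝓝 (ENNReal.ofReal (1 / 2) * W2sq (gaussian m) η)) ∧
    (m = x →
      Tendsto (fun β : ℝ => ENNReal.ofReal (1 / β) * prescribedMeanSBcost β x m η)
        (𝓝[>] 0) (𝓝 (ENNReal.ofReal (1 / 2) * W2sq (gaussian x) η))) ∧
    (m ≠ x →
      Tendsto (fun β : ℝ => ENNReal.ofReal (1 / β) * prescribedMeanSBcost β x m η)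
        (𝓝[>] 0) (𝓝 ⊤)) := by
  refine ⟨?_, ?_, fun hmx => tendsto_rescaled_prescribedMeanSBcost_of_ne hmx η⟩
  · simpa only [prescribedMeanSBcost_eq_self_add _ x m,
      ENNReal.add_sub_cancel_right ENNReal.ofReal_ne_top]
      using tendsto_rescaled_prescribedMeanSBcost_self m η
  · rintro rfl
    exact tendsto_rescaled_prescribedMeanSBcost_self m η

end PrescribedMean

/-- Rescaled limit of the Schrödinger--Bass cost as `β → 0`: the Bass (mBB) cost. -/
theorem SBcost_rescaled_limit {d : ℕ} (x : Euc d) (η : Measure (Euc d))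
    [IsProbabilityMeasure η] (hη : FiniteSecondMoment η) :
    Tendsto
      (fun β : ℝ => ENNReal.ofReal (1 / β)
        * (SBcost β x η - ENNReal.ofReal (1 / 2 * ‖bary η - x‖ ^ 2)))
      (nhdsWithin 0 (Set.Ioi 0))
      (nhds (ENNReal.ofReal (1 / 2) * W2sq (gaussian (bary η)) η)) ∧
    (bary η = x →
      Tendsto (fun β : ℝ => ENNReal.ofReal (1 / β) * SBcost β x η)
        (nhdsWithin 0 (Set.Ioi 0))
        (nhds (ENNReal.ofReal (1 / 2) * W2sq (gaussian x) η))) ∧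
    (bary η ≠ x →
      Tendsto (fun β : ℝ => ENNReal.ofReal (1 / β) * SBcost β x η)
        (nhdsWithin 0 (Set.Ioi 0)) (nhds ⊤)) :=
  SBcost_rescaled_limit_general x (bary η) η
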